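/- Σ_{k=1}^∞ λ(2k)/((2k+2)·2^{2k}) = -(log 2)/4 + 2G/π - 7ζ_E(3)/(2π²), where λ(s) = Σ_{m=0}^∞ 1/(2m+1)^s, G is Catalan's constant, and ζ_E(3) = Σ_{n=1}^∞ (-1)^{n+1}/n³. -/

import Mathlib

open Real

noncomputable def dirichletLambda (s : ℕ) : ℝ := ∑' m : ℕ, 1 / (2 * (m : ℝ) + 1) ^ s

open Filter Topology

lemma summable_one_div_odd_pow {s : ℕ} (hs : 1 < s) :
    Summable fun m : ℕ => 1 / (2 * (m : ℝ) + 1) ^ s := by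
  have h := (Real.summable_one_div_nat_pow.mpr hs).comp_injective
    (i := fun m : ℕ => 2 * m + 1) (fun a b h => by simpa using h)
  simpa [Function.comp_def] using h

lemma ofReal_pi_mul_tan_eq_cot {x : ℝ} (h0 : 0 < x) (h1 : x < 1) :
    ((π * tan (π * x / 2) : ℝ) : ℂ) =
      π * Complex.cot (π * (x / 2 : ℝ)) - 2 * (π * Complex.cot (π * x)) := by
  have hs : 0 < sin (π * x / 2) := sin_pos_of_pos_of_lt_pi (by positivity) (by nlinarith [pi_pos])
  have hc : 0 < cos (π * x / 2) := cos_pos_of_mem_Ioo ⟨by nlinarith [pi_pos], by nlinarith [pi_pos]⟩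
  have h : π * tan (π * x / 2) = π * Real.cot (π * (x / 2)) - 2 * (π * Real.cot (π * x)) := by
    rw [show π * x = 2 * (π * x / 2) by ring, show π * (x / 2) = π * x / 2 by ring,
      show (2 * (π * x / 2)) / 2 = π * x / 2 by ring, tan_eq_sin_div_cos,
      Real.cot_eq_cos_div_sin, Real.cot_eq_cos_div_sin, sin_two_mul, cos_two_mul']
    field_simp
    ring
  rw [h]
  push_cast
  rfl

/-- Partial fraction expansion of the tangent. -/
lemma hasSum_pi_mul_tan {x : ℝ} (h0 : 0 < x) (h1 : x < 1) :
    HasSum (fun m : ℕ => 4 * x / ((2 * (m : ℝ) + 1) ^ 2 - x ^ 2)) (π * tan (π * x / 2)) := by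
  have mem : ∀ y : ℝ, 0 < y → y < 1 → (y : ℂ) ∈ Complex.integerComplement := by
    rintro y hy0 hy1 ⟨n, hn⟩
    have hn : (n : ℝ) = y := by exact_mod_cast hn
    rw [← hn] at hy0 hy1
    norm_cast at hy0 hy1
    omega
  have hx := mem x h0 h1
  have hx2 := mem (x / 2) (by linarith) (by linarith)
  have e1 := cot_series_rep' hx
  have e2 := cot_series_rep' hx2
  let g : ℕ → ℂ := fun n => 1 / ((x : ℂ) - (n + 1)) + 1 / ((x : ℂ) + (n + 1))
  have s1 : Summable g := summable_cotTerm hx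
  have so : Summable fun m => g (2 * m) := s1.comp_injective (mul_right_injective₀ two_ne_zero)
  have se : Summable fun m => g (2 * m + 1) :=
    s1.comp_injective ((add_left_injective 1).comp (mul_right_injective₀ two_ne_zero))
  have split := tsum_even_add_odd so se
  have half : ∑' n : ℕ, (1 / (((x / 2 : ℝ) : ℂ) - (n + 1)) + 1 / (((x / 2 : ℝ) : ℂ) + (n + 1)))
      = 2 * ∑' m : ℕ, (1 / ((x : ℂ) - ((2 * m + 1 : ℕ) + 1)) +
          1 / ((x : ℂ) + ((2 * m + 1 : ℕ) + 1))) := by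
    rw [← tsum_mul_left]
    refine tsum_congr fun n => ?_
    have r1 : ((x / 2 : ℝ) : ℂ) - (n + 1) = ((x : ℂ) - ((2 * n + 1 : ℕ) + 1)) / 2 := by
      push_cast; ring
    have r2 : ((x / 2 : ℝ) : ℂ) + (n + 1) = ((x : ℂ) + ((2 * n + 1 : ℕ) + 1)) / 2 := by
      push_cast; ring
    rw [r1, r2, one_div_div, one_div_div]
    ring
  have key : ((π * tan (π * x / 2) : ℝ) : ℂ) =
      ∑' m : ℕ, -2 * (1 / ((x : ℂ) - ((2 * m : ℕ) + 1)) + 1 / ((x : ℂ) + ((2 * m : ℕ) + 1))) := by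
    rw [tsum_mul_left]
    rw [ofReal_pi_mul_tan_eq_cot h0 h1]
    rw [half] at e2
    change _ = ∑' n, g n at e1
    rw [← split] at e1
    have hxc : (x : ℂ) ≠ 0 := by exact_mod_cast h0.ne'
    have r : 1 / (((x / 2 : ℝ)) : ℂ) = 2 * (1 / x) := by push_cast; field_simp
    rw [r] at e2
    linear_combination e2 - 2 * e1
  have hS : HasSum (fun m : ℕ => ((4 * x / ((2 * (m : ℝ) + 1) ^ 2 - x ^ 2) : ℝ) : ℂ))
      ((π * tan (π * x / 2) : ℝ) : ℂ) := by
    rw [key]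
    convert! (so.mul_left (-2)).hasSum using 1
    ext m
    have a1 : (x : ℂ) - (2 * m + 1) ≠ 0 := by
      have : x - (2 * m + 1) ≠ 0 := by
        have : (0 : ℝ) ≤ m := by positivity
        apply ne_of_lt; linarith
      exact_mod_cast this
    have a2 : (x : ℂ) + (2 * m + 1) ≠ 0 := by
      have : x + (2 * m + 1) ≠ 0 := by positivity
      exact_mod_cast this
    have a3 : (2 * (m : ℂ) + 1) ^ 2 - x ^ 2 ≠ 0 := by
      rw [show (2 * (m : ℂ) + 1) ^ 2 - x ^ 2
        = -(((x : ℂ) - (2 * m + 1)) * ((x : ℂ) + (2 * m + 1))) by ring]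
      exact neg_ne_zero.mpr (mul_ne_zero a1 a2)
    simp only [g]
    push_cast
    field_simp
    ring
  exact Complex.hasSum_ofReal.mp hS

/-- Power series expansion of `x ^ 2 * tan (π x / 2)` in terms of the lambda values. -/
lemma hasSum_dirichletLambda_mul_pow {x : ℝ} (h0 : 0 < x) (h1 : x < 1) :
    HasSum (fun k : ℕ => 4 * dirichletLambda (2 * (k + 1)) * x ^ (2 * k + 3))
      (π * x ^ 2 * tan (π * x / 2)) := by
  have geo : ∀ m : ℕ, HasSum
      (fun k : ℕ => 4 * x ^ (2 * k + 3) * (1 / (2 * (m : ℝ) + 1) ^ (2 * (k + 1))))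
      (x ^ 2 * (4 * x / ((2 * (m : ℝ) + 1) ^ 2 - x ^ 2))) := by
    intro m
    have hm : (0 : ℝ) ≤ m := by positivity
    have ha : (0 : ℝ) < 2 * m + 1 := by positivity
    have hlt : x ^ 2 < (2 * (m : ℝ) + 1) ^ 2 := by nlinarith
    have hg := (hasSum_geometric_of_lt_one (r := x ^ 2 / (2 * (m : ℝ) + 1) ^ 2) (by positivity)
      ((div_lt_one (by positivity)).mpr hlt)).mul_left (4 * x ^ 3 / (2 * (m : ℝ) + 1) ^ 2)
    convert! hg using 1
    · ext k
      rw [div_pow, ← pow_mul, ← pow_mul]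
      field_simp
      ring
    · have : (2 * (m : ℝ) + 1) ^ 2 - x ^ 2 ≠ 0 := by linarith
      field_simp
  have tot := (hasSum_pi_mul_tan h0 h1).mul_left (x ^ 2)
  have hsum : Summable fun p : ℕ × ℕ =>
      4 * x ^ (2 * p.2 + 3) * (1 / (2 * (p.1 : ℝ) + 1) ^ (2 * (p.2 + 1))) := by
    rw [summable_prod_of_nonneg (fun p => by simp only [Pi.zero_apply]; positivity)]
    refine ⟨fun m => (geo m).summable, ?_⟩
    simp_rw [fun m => (geo m).tsum_eq]
    exact tot.summable
  have hval := hsum.hasSum.prod_fiberwise geo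
  have heq := hval.unique tot
  have hswap := (Equiv.prodComm ℕ ℕ).hasSum_iff.mpr hsum.hasSum
  rw [heq] at hswap
  convert! hswap.prod_fiberwise (g := fun k => 4 * dirichletLambda (2 * (k + 1)) * x ^ (2 * k + 3))
    (fun k => ?_) using 1
  · ring
  · have := (summable_one_div_odd_pow (s := 2 * (k + 1)) (by omega)).hasSum.mul_left
      (4 * x ^ (2 * k + 3))
    rw [mul_right_comm]
    exact this

lemma tendsto_alternating_harmonic :
    Tendsto (fun M : ℕ => ∑ i ∈ Finset.range (2 * M), (-1 : ℝ) ^ i / ((i : ℝ) + 1)) atTop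
      (𝓝 (log 2)) := by
  have e : ∀ M : ℕ, ∑ i ∈ Finset.range (2 * M), (-1 : ℝ) ^ i / ((i : ℝ) + 1)
      = (harmonic (2 * M) : ℝ) - harmonic M := by
    intro M
    induction M with
    | zero => simp
    | succ M ih =>
      rw [show 2 * (M + 1) = 2 * M + 1 + 1 by ring, Finset.sum_range_succ, Finset.sum_range_succ,
        ih, harmonic_succ, harmonic_succ, harmonic_succ]
      push_cast
      rw [pow_succ, pow_mul]
      norm_num
      field_simp
      ring
  have h := Real.tendsto_harmonic_sub_log
  have h2 : Tendsto (fun M : ℕ => 2 * M) atTop atTop :=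
    tendsto_id.const_mul_atTop' two_pos
  have h3 := ((h.comp h2).sub h).add_const (log 2)
  rw [sub_self, zero_add] at h3
  refine h3.congr' ?_
  filter_upwards [eventually_gt_atTop 0] with M hM
  have : (M : ℝ) ≠ 0 := by positivity
  rw [e]
  simp only [Function.comp_def]
  push_cast
  rw [log_mul two_ne_zero this]
  ring

lemma two_mul_sum_alternating_sin (θ : ℝ) (N : ℕ) :
    cos θ * ∑ n ∈ Finset.range N, (-1) ^ n * (2 * sin (2 * (n + 1) * θ))
      = sin θ - (-1) ^ N * sin ((2 * N + 1) * θ) := by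
  induction N with
  | zero => simp
  | succ N ih =>
    rw [Finset.sum_range_succ, mul_add, ih]
    push_cast
    have e1 : (2 * (N : ℝ) + 1) * θ = 2 * (N + 1) * θ - θ := by ring
    have e2 : (2 * ((N : ℝ) + 1) + 1) * θ = 2 * (N + 1) * θ + θ := by ring
    rw [e1, e2, sin_add, sin_sub, pow_succ]
    ring

/-- Riemann-Lebesgue lemma on an interval, against sines. -/
lemma tendsto_integral_mul_sin {a b : ℝ} (hab : a ≤ b) {u : ℝ → ℝ}
    (hu : IntervalIntegrable u MeasureTheory.volume a b) :
    Tendsto (fun w : ℝ => ∫ x in a..b, u x * sin (w * x)) atTop (𝓝 0) := by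
  have h := Real.tendsto_integral_exp_smul_cocompact
    (Set.indicator (Set.Ioc a b) fun x => (u x : ℂ))
  have hc : Tendsto (fun w : ℝ => -w / (2 * π)) atTop (cocompact ℝ) := by
    refine Tendsto.mono_right ?_ atBot_le_cocompact
    exact (tendsto_neg_atTop_atBot).atBot_div_const (by positivity)
  have h2 := (Complex.continuous_im.tendsto _).comp (h.comp hc)
  simp only [Complex.zero_im] at h2
  refine h2.congr fun w => ?_
  simp only [Function.comp_def]
  have e : ∀ v : ℝ, (Real.fourierChar (-(v * (-w / (2 * π)))) : Circle) •
      (Set.Ioc a b).indicator (fun x => (u x : ℂ)) v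
      = (Set.Ioc a b).indicator (fun x => (u x : ℂ) * Complex.exp ((w * x : ℝ) * Complex.I)) v := by
    intro v
    by_cases hv : v ∈ Set.Ioc a b
    · rw [Set.indicator_of_mem hv, Set.indicator_of_mem hv, Circle.smul_def,
        Real.fourierChar_apply, smul_eq_mul, mul_comm]
      congr 4
      field_simp
    · rw [Set.indicator_of_notMem hv, Set.indicator_of_notMem hv, smul_zero]
  simp_rw [e]
  rw [MeasureTheory.integral_indicator measurableSet_Ioc,
    intervalIntegral.integral_of_le hab]
  have hi : MeasureTheory.IntegrableOn
      (fun x => (u x : ℂ) * Complex.exp ((w * x : ℝ) * Complex.I)) (Set.Ioc a b) := by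
    rw [← intervalIntegrable_iff_integrableOn_Ioc_of_le hab]
    have hu' : IntervalIntegrable (fun x => (u x : ℂ)) MeasureTheory.volume a b :=
      ⟨hu.1.ofReal, hu.2.ofReal⟩
    exact hu'.mul_continuousOn (by fun_prop)
  have := Complex.imCLM.integral_comp_comm hi
  simp only [Complex.imCLM_apply] at this
  rw [← this]
  refine MeasureTheory.integral_congr_ae (Eventually.of_forall fun x => ?_)
  simp only [Complex.im_ofReal_mul, Complex.exp_ofReal_mul_I_im]

lemma integral_sq_mul_sin {c : ℝ} (hc : c ≠ 0) (b : ℝ) :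
    ∫ x in (0 : ℝ)..b, x ^ 2 * sin (c * x) =
      -(b ^ 2 * cos (c * b)) / c + 2 * b * sin (c * b) / c ^ 2
        + 2 * (cos (c * b) - 1) / c ^ 3 := by
  have hd : ∀ x ∈ Set.uIcc 0 b, HasDerivAt
      (fun x => -(x ^ 2 * cos (c * x)) / c + 2 * x * sin (c * x) / c ^ 2
        + 2 * (cos (c * x) - 1) / c ^ 3) (x ^ 2 * sin (c * x)) x := by
    intro x _
    have hl : HasDerivAt (fun x => c * x) c x := by simpa using (hasDerivAt_id x).const_mul c
    have hs := hl.sin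
    have hco := hl.cos
    convert! (((((hasDerivAt_pow 2 x).mul hco).neg.div_const c).add
      ((((hasDerivAt_id x).const_mul 2).mul hs).div_const (c ^ 2))).add
      (((hco.sub_const 1).const_mul 2).div_const (c ^ 3))) using 1
    simp
    field_simp
    ring
  rw [intervalIntegral.integral_eq_sub_of_hasDerivAt hd
    (Continuous.intervalIntegrable (by fun_prop) _ _)]
  simp

lemma tendsto_sum_integral_tan :
    Tendsto (fun N : ℕ => ∑ n ∈ Finset.range N,
      (-1) ^ n * (2 * ∫ x in (0 : ℝ)..(π / 4), x ^ 2 * sin (2 * (n + 1) * x))) atTop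
      (𝓝 (∫ x in (0 : ℝ)..(π / 4), x ^ 2 * tan x)) := by
  have hpos : ∀ x ∈ Set.uIcc 0 (π / 4), 0 < cos x := by
    intro x hx
    rw [Set.uIcc_of_le (by positivity)] at hx
    exact cos_pos_of_mem_Ioo ⟨by linarith [hx.1, pi_pos], by linarith [hx.2, pi_pos]⟩
  have hcont : ContinuousOn (fun x => x ^ 2 / cos x) (Set.uIcc 0 (π / 4)) :=
    ContinuousOn.div (by fun_prop) (by fun_prop) fun x hx => (hpos x hx).ne'
  have htan : ContinuousOn (fun x => x ^ 2 * tan x) (Set.uIcc 0 (π / 4)) :=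
    ContinuousOn.mul (by fun_prop)
      fun x hx => (continuousAt_tan.mpr (hpos x hx).ne').continuousWithinAt
  have hRL := tendsto_integral_mul_sin (by positivity) hcont.intervalIntegrable
  have hN : Tendsto (fun N : ℕ => 2 * (N : ℝ) + 1) atTop atTop :=
    tendsto_atTop_add_const_right _ _ (tendsto_natCast_atTop_atTop.const_mul_atTop two_pos)
  have hR := hRL.comp hN
  have hR' : Tendsto (fun N : ℕ => (-1 : ℝ) ^ N *
      ∫ x in (0 : ℝ)..(π / 4), x ^ 2 / cos x * sin ((2 * N + 1) * x)) atTop (𝓝 0) := by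
    refine squeeze_zero_norm (fun N => ?_) (tendsto_zero_iff_norm_tendsto_zero.mp hR)
    simp
  have := hR'.const_sub (∫ x in (0 : ℝ)..(π / 4), x ^ 2 * tan x)
  rw [sub_zero] at this
  refine this.congr fun N => ?_
  have hrem : ContinuousOn (fun x => (-1) ^ N * (x ^ 2 / cos x * sin ((2 * N + 1) * x)))
      (Set.uIcc 0 (π / 4)) := continuousOn_const.mul (hcont.mul (by fun_prop))
  simp_rw [← intervalIntegral.integral_const_mul]
  rw [← intervalIntegral.integral_finsetSum
      fun n _ => Continuous.intervalIntegrable (by fun_prop) _ _,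
    ← intervalIntegral.integral_sub htan.intervalIntegrable hrem.intervalIntegrable]
  refine intervalIntegral.integral_congr fun x hx => ?_
  have hc := hpos x hx
  have h := two_mul_sum_alternating_sin x N
  have h2 : ∑ n ∈ Finset.range N, (-1) ^ n * (2 * (x ^ 2 * sin (2 * (n + 1) * x)))
      = x ^ 2 * ∑ n ∈ Finset.range N, (-1) ^ n * (2 * sin (2 * (n + 1) * x)) := by
    rw [Finset.mul_sum]
    exact Finset.sum_congr rfl fun n _ => by ring
  rw [h2, eq_div_of_mul_eq hc.ne' ((mul_comm _ _).trans h), tan_eq_sin_div_cos]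
  field_simp

lemma dirichletLambda_nonneg (s : ℕ) : 0 ≤ dirichletLambda s :=
  tsum_nonneg fun m => by positivity

lemma dirichletLambda_le_two {s : ℕ} (hs : 2 ≤ s) : dirichletLambda s ≤ dirichletLambda 2 := by
  refine (summable_one_div_odd_pow (by omega)).tsum_le_tsum (fun m => ?_)
    (summable_one_div_odd_pow one_lt_two)
  have : (1 : ℝ) ≤ 2 * m + 1 := by linarith [(Nat.cast_nonneg m : (0 : ℝ) ≤ m)]
  gcongr

lemma hasSum_lambda_series :
    HasSum (fun k : ℕ =>
      dirichletLambda (2 * (k + 1)) / ((2 * ((k : ℝ) + 1) + 2) * 2 ^ (2 * (k + 1))))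
      (∫ x in (0 : ℝ)..(1 / 2), π * x ^ 2 * tan (π * x / 2)) := by
  have bound_summable : Summable fun k : ℕ => 4 * dirichletLambda 2 * (1 / 2 : ℝ) ^ k :=
    (summable_geometric_of_lt_one (by norm_num) (by norm_num)).mul_left _
  have h := intervalIntegral.hasSum_integral_of_dominated_convergence
    (μ := MeasureTheory.volume) (a := 0) (b := 1 / 2)
    (F := fun k x => 4 * dirichletLambda (2 * (k + 1)) * x ^ (2 * k + 3))
    (f := fun x => π * x ^ 2 * tan (π * x / 2))
    (fun k _ => 4 * dirichletLambda 2 * (1 / 2 : ℝ) ^ k)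
    (fun k => Continuous.aestronglyMeasurable (by fun_prop))
    (fun k => Eventually.of_forall fun x hx => ?_)
    (Eventually.of_forall fun _ _ => bound_summable)
    intervalIntegrable_const
    (Eventually.of_forall fun x hx => ?_)
  · convert! h using 1
    ext k
    rw [intervalIntegral.integral_const_mul, integral_pow]
    push_cast
    rw [zero_pow (by omega), sub_zero, show 2 * k + 3 + 1 = 2 * (k + 1) + 2 by ring, pow_add,
      one_div_pow]
    field_simp
    ring
  · rw [Set.uIoc_of_le (by norm_num)] at hx
    have hl := dirichletLambda_nonneg (2 * (k + 1))
    have hx0 := hx.1.le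
    rw [norm_of_nonneg (by positivity)]
    have h1 : x ^ (2 * k + 3) ≤ (1 / 2 : ℝ) ^ k :=
      (pow_le_pow_of_le_one hx0 (by linarith [hx.2]) (by omega)).trans
        (pow_le_pow_left₀ hx0 hx.2 k)
    have h2 := dirichletLambda_le_two (s := 2 * (k + 1)) (by omega)
    have h3 := dirichletLambda_nonneg 2
    gcongr
  · rw [Set.uIoc_of_le (by norm_num)] at hx
    exact hasSum_dirichletLambda_mul_pow hx.1 (by linarith [hx.2])

lemma integral_sq_mul_tan_half_pi :
    ∫ x in (0 : ℝ)..(1 / 2), π * x ^ 2 * tan (π * x / 2)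
      = 8 / π ^ 2 * ∫ x in (0 : ℝ)..(π / 4), x ^ 2 * tan x := by
  have h := intervalIntegral.integral_comp_mul_left (a := 0) (b := 1 / 2)
    (fun x => x ^ 2 * tan x) (c := π / 2) (by positivity)
  rw [mul_zero, show π / 2 * (1 / 2) = π / 4 by ring, smul_eq_mul] at h
  rw [← mul_inv_cancel_left₀ (a := π / 2) (by positivity)
    (∫ x in (0 : ℝ)..(π / 4), x ^ 2 * tan x), ← h, ← mul_assoc,
    ← intervalIntegral.integral_const_mul]
  refine intervalIntegral.integral_congr fun x _ => ?_
  rw [show π * x / 2 = π / 2 * x by ring]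
  field_simp
  ring

lemma summable_one_div_succ_cube : Summable fun n : ℕ => 1 / ((n : ℝ) + 1) ^ 3 := by
  simpa using (summable_nat_add_iff 1).mpr
    (Real.summable_one_div_nat_pow.mpr (show 1 < 3 by norm_num))

lemma summable_alternating_succ_cube :
    Summable fun n : ℕ => (-1 : ℝ) ^ (n + 1 + 1) / ((n : ℝ) + 1) ^ 3 := by
  refine Summable.of_norm_bounded summable_one_div_succ_cube fun n => ?_
  rw [norm_div, norm_pow, norm_neg, norm_one, one_pow, norm_of_nonneg (by positivity)]

lemma summable_catalan : Summable fun n : ℕ => (-1 : ℝ) ^ n / (2 * (n : ℝ) + 1) ^ 2 := by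
  refine Summable.of_norm_bounded (summable_one_div_odd_pow one_lt_two) fun n => ?_
  rw [norm_div, norm_pow, norm_neg, norm_one, one_pow, norm_of_nonneg (by positivity)]

/-- Relation between the sums of inverse cubes over the odd integers, over all positive integers,
and with alternating signs. -/
lemma odd_cube_sum_relation :
    8 * dirichletLambda 3 = 7 * (∑' n : ℕ, 1 / ((n : ℝ) + 1) ^ 3) ∧
    4 * (∑' n : ℕ, (-1 : ℝ) ^ (n + 1 + 1) / ((n : ℝ) + 1) ^ 3)
      = 3 * ∑' n : ℕ, 1 / ((n : ℝ) + 1) ^ 3 := by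
  have ho : HasSum (fun m : ℕ => 1 / (2 * (m : ℝ) + 1) ^ 3) (dirichletLambda 3) :=
    (summable_one_div_odd_pow (by norm_num)).hasSum
  have hz := summable_one_div_succ_cube.hasSum
  have h1 : HasSum (fun n : ℕ => 1 / ((n : ℝ) + 1) ^ 3)
      (dirichletLambda 3 + 1 / 8 * ∑' n : ℕ, 1 / ((n : ℝ) + 1) ^ 3) := by
    refine HasSum.even_add_odd ?_ ?_
    · simpa using ho
    · convert! hz.mul_left (1 / 8) using 1
      ext k
      push_cast
      rw [show 2 * (k : ℝ) + 1 + 1 = 2 * (k + 1) by ring, mul_pow]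
      field_simp
      norm_num
  have h2 : HasSum (fun n : ℕ => (-1 : ℝ) ^ (n + 1 + 1) / ((n : ℝ) + 1) ^ 3)
      (dirichletLambda 3 + -1 / 8 * ∑' n : ℕ, 1 / ((n : ℝ) + 1) ^ 3) := by
    refine HasSum.even_add_odd ?_ ?_
    · simpa [pow_succ, pow_mul] using ho
    · convert! hz.mul_left (-1 / 8) using 1
      ext k
      push_cast
      rw [show 2 * (k : ℝ) + 1 + 1 = 2 * (k + 1) by ring, mul_pow]
      simp only [pow_succ, pow_mul]
      norm_num
      field_simp
  have e1 := hz.unique h1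
  have e2 := h2.tsum_eq
  constructor <;> linarith

lemma cos_succ_mul_pi (i : ℕ) : cos (((i : ℝ) + 1) * π) = -(-1) ^ i := by
  have := cos_nat_mul_pi (i + 1)
  push_cast at this
  rw [this, pow_succ]
  ring

lemma integral_sq_mul_sin_odd (i : ℕ) :
    2 * ∫ x in (0 : ℝ)..(π / 4), x ^ 2 * sin (2 * (((2 * i : ℕ) : ℝ) + 1) * x)
      = π / 4 * ((-1) ^ i / (2 * (i : ℝ) + 1) ^ 2) - 1 / 2 * (1 / (2 * (i : ℝ) + 1) ^ 3) := by
  have e : 2 * (((2 * i : ℕ) : ℝ) + 1) * (π / 4) = i * π + π / 2 := by push_cast; ring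
  rw [integral_sq_mul_sin (by positivity), e, cos_add_pi_div_two, sin_add_pi_div_two,
    sin_nat_mul_pi, cos_nat_mul_pi]
  push_cast
  field_simp
  ring

lemma integral_sq_mul_sin_even (i : ℕ) :
    2 * ∫ x in (0 : ℝ)..(π / 4), x ^ 2 * sin (2 * (((2 * i + 1 : ℕ) : ℝ) + 1) * x)
      = π ^ 2 / 32 * ((-1) ^ i / ((i : ℝ) + 1))
        - 1 / 16 * ((-1) ^ (i + 1 + 1) / ((i : ℝ) + 1) ^ 3 + 1 / ((i : ℝ) + 1) ^ 3) := by
  have e : 2 * (((2 * i + 1 : ℕ) : ℝ) + 1) * (π / 4) = (i + 1) * π := by push_cast; ring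
  have hs : sin (((i : ℝ) + 1) * π) = 0 := by exact_mod_cast sin_nat_mul_pi (i + 1)
  rw [integral_sq_mul_sin (by positivity), e, cos_succ_mul_pi, hs, pow_succ, pow_succ]
  push_cast
  rw [show 2 * (2 * (i : ℝ) + 1 + 1) = 4 * (i + 1) by ring]
  field_simp
  ring

lemma sum_range_two_mul (f : ℕ → ℝ) (M : ℕ) :
    ∑ n ∈ Finset.range (2 * M), f n
      = ∑ i ∈ Finset.range M, (f (2 * i) + f (2 * i + 1)) := by
  induction M with
  | zero => simp
  | succ M ih =>
    rw [show 2 * (M + 1) = 2 * M + 1 + 1 by ring, Finset.sum_range_succ, Finset.sum_range_succ,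
      Finset.sum_range_succ, ih, add_assoc]

lemma integral_sq_mul_tan :
    ∫ x in (0 : ℝ)..(π / 4), x ^ 2 * tan x =
      π / 4 * (∑' n : ℕ, (-1 : ℝ) ^ n / (2 * (n : ℝ) + 1) ^ 2) - 1 / 2 * dirichletLambda 3
        - π ^ 2 / 32 * log 2
        + 1 / 16 * ((∑' n : ℕ, (-1 : ℝ) ^ (n + 1 + 1) / ((n : ℝ) + 1) ^ 3)
          + ∑' n : ℕ, 1 / ((n : ℝ) + 1) ^ 3) := by
  have h2 : Tendsto (fun M : ℕ => 2 * M) atTop atTop := tendsto_id.const_mul_atTop' two_pos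
  have hJ := tendsto_sum_integral_tan.comp (h2.comp h2)
  have hG := (summable_catalan.hasSum.tendsto_sum_nat.comp h2).const_mul (π / 4)
  have hO := ((summable_one_div_odd_pow (s := 3) (by norm_num)).hasSum.tendsto_sum_nat.comp
    h2).const_mul (1 / 2)
  have hL := tendsto_alternating_harmonic.const_mul (π ^ 2 / 32)
  have hE := ((summable_alternating_succ_cube.hasSum.tendsto_sum_nat.comp h2).add
    (summable_one_div_succ_cube.hasSum.tendsto_sum_nat.comp h2)).const_mul (1 / 16)
  refine tendsto_nhds_unique hJ ((((hG.sub hO).sub hL).add hE).congr fun M => ?_)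
  simp only [Function.comp_def]
  rw [sum_range_two_mul _ (2 * M)]
  simp_rw [integral_sq_mul_sin_odd, integral_sq_mul_sin_even]
  rw [← Finset.sum_add_distrib]
  simp_rw [Finset.mul_sum]
  rw [← Finset.sum_sub_distrib, ← Finset.sum_sub_distrib, ← Finset.sum_add_distrib]
  refine Finset.sum_congr rfl fun i _ => ?_
  have hp : (-1 : ℝ) ^ (2 * i) = 1 := by rw [pow_mul]; norm_num
  rw [pow_succ _ (2 * i), hp]
  ring

theorem lambda_series_two :
    ∑' k : ℕ, dirichletLambda (2 * (k + 1)) / ((2 * ((k : ℝ) + 1) + 2) * 2 ^ (2 * (k + 1)))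
      = -(Real.log 2) / 4 + 2 * (∑' n : ℕ, (-1 : ℝ) ^ n / (2 * (n : ℝ) + 1) ^ 2) / π
        - 7 * (∑' n : ℕ, (-1 : ℝ) ^ (n + 1 + 1) / ((n : ℝ) + 1) ^ 3) / (2 * π ^ 2) := by
  obtain ⟨hO, hE⟩ := odd_cube_sum_relation
  rw [hasSum_lambda_series.tsum_eq, integral_sq_mul_tan_half_pi, integral_sq_mul_tan]
  field_simp
  linear_combination (-2048) * hO + 4096 * hE
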